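/- Let n ≥ 1 and p ∈ (1,∞). There exist constants 0 < c ≤ C, depending only on p, such that for every κ ≥ 0 and all n×n real matrices A and B one has c·|V(A) − V(B)|² ≤ φ_κ(|A|) − φ_κ(|B|) − S(B) : (A − B) ≤ C·|V(A) − V(B)|². -/

import Mathlib

/-!
Write `f s = (κ + s) ^ (p - 2) * s` and `g s = (κ + s) ^ ((p - 2) / 2) * s`, so that `φ_κ' = f` and
`g ^ 2 = f s * s`, and put `a = |A|`, `b = |B|`, `r = A : B`. Both the Bregman distance
`φ_κ a - φ_κ b - S(B) : (A - B)` and `|V(A) - V(B)|²` are affine in `r ∈ [-ab, ab]`, so the estimate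
only has to be checked at `r = ab` and `r = -ab`.

For `r = ab` one compares `F = φ_κ a - φ_κ b - f b * (a - b)` with `G = (g a - g b)²`, which both
vanish for `a = b`, through their derivatives in the *larger* of the two variables
(`bregman_compare_of_le`, `bregman_compare_of_ge`). These derivatives are comparable by `radial_compare`:
the increments `f_γ x - f_γ b`, where `f_γ s = (κ + s) ^ γ * s` and `γ > -1`, agree for different `γ` up to
constants and powers of `κ + x`, provided `b ≤ x`. With `u = (κ + b) / (κ + x)` this is an inequality affine in
`b ∈ [0, u x]`; at `b = 0` it is trivial and at `b = u x` it is Bernoulli's inequality.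

For `r = -ab` the Bregman distance is the sum of its values at `(a, 0)` and `(0, b)` and of `f b * a`,
while `(g a + g b)²` is comparable with `g a ^ 2 + g b ^ 2`, so the first case applies.
-/

open Real MeasureTheory

/-- Frobenius norm of an n × n real matrix. -/
noncomputable def frobNorm {n : ℕ} (A : Matrix (Fin n) (Fin n) ℝ) : ℝ :=
  Real.sqrt (∑ i, ∑ j, (A i j) ^ 2)

/-- Frobenius inner product A : B of two n × n real matrices. -/
noncomputable def frobInner {n : ℕ} (A B : Matrix (Fin n) (Fin n) ℝ) : ℝ :=
  ∑ i, ∑ j, A i j * B i j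

/-- S(ξ) = (κ + |ξ|)^(p-2) ξ. -/
noncomputable def Smap {n : ℕ} (p κ : ℝ) (A : Matrix (Fin n) (Fin n) ℝ) :
    Matrix (Fin n) (Fin n) ℝ :=
  ((κ + frobNorm A) ^ (p - 2)) • A

/-- V(ξ) = (κ + |ξ|)^((p-2)/2) ξ. -/
noncomputable def Vmap {n : ℕ} (p κ : ℝ) (A : Matrix (Fin n) (Fin n) ℝ) :
    Matrix (Fin n) (Fin n) ℝ :=
  ((κ + frobNorm A) ^ ((p - 2) / 2)) • A

/-- The shifted potential φ_κ(t) = ∫₀^t (κ+s)^(p-2) s ds. -/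
noncomputable def phiShift (p κ t : ℝ) : ℝ :=
  ∫ s in (0:ℝ)..t, (κ + s) ^ (p - 2) * s

/-! ### Radial profiles -/

/-- The radial profile `s ↦ (κ + s) ^ γ * s`. The maps `S` and `V` have the profiles with exponents
`γ = p - 2` and `γ = (p - 2) / 2`. -/
noncomputable def radial (κ γ s : ℝ) : ℝ := (κ + s) ^ γ * s

lemma radial_zero (κ γ : ℝ) : radial κ γ 0 = 0 := by simp [radial]

lemma one_sub_rpow_le {α β u : ℝ} (hα : 0 < α) (hβ : 0 < β) (hu : 0 ≤ u) (hu1 : u ≤ 1) :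
    1 - u ^ α ≤ max 1 (α / β) * (1 - u ^ β) := by
  have h1 : u ^ β ≤ 1 := Real.rpow_le_one hu hu1 hβ.le
  rcases le_total α β with h | h
  · have : u ^ β ≤ u ^ α := by
      rcases hu.eq_or_lt with rfl | hu'
      · rw [Real.zero_rpow hα.ne', Real.zero_rpow hβ.ne']
      · exact Real.rpow_le_rpow_of_exponent_ge hu' hu1 h
    nlinarith [le_max_left 1 (α / β)]
  ·
    -- Bernoulli's inequality for `y ^ (α / β)`, with `y = u ^ β`
    have h2 := one_add_mul_self_le_rpow_one_add (s := u ^ β - 1) (p := α / β)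
      (by linarith [Real.rpow_nonneg hu β]) ((one_le_div hβ).2 h)
    have h3 : (1 + (u ^ β - 1)) ^ (α / β) = u ^ α := by
      rw [add_sub_cancel, ← Real.rpow_mul hu, mul_div_cancel₀ _ hβ.ne']
    rw [h3] at h2
    nlinarith [le_max_right 1 (α / β)]

/-- Increments of the radial profiles for two exponents are comparable, up to the corresponding power
of `κ + x` at the larger endpoint `x`. -/
lemma radial_compare {γ δ : ℝ} (hγ : -1 < γ) (hδ : -1 < δ) {κ b x : ℝ} (hκ : 0 ≤ κ) (hb : 0 ≤ b)
    (hbx : b ≤ x) (hx : 0 < x) :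
    radial κ γ x - radial κ γ b ≤
      max 1 ((γ + 1) / (δ + 1)) * ((κ + x) ^ (γ - δ) * (radial κ δ x - radial κ δ b)) := by
  set C := max 1 ((γ + 1) / (δ + 1)) with hC
  have hC1 : 1 ≤ C := le_max_left _ _
  rcases hb.eq_or_lt with rfl | hb
  · have : (κ + x) ^ (γ - δ) * ((κ + x) ^ δ * x) = (κ + x) ^ γ * x := by
      rw [← mul_assoc, ← Real.rpow_add (by linarith), sub_add_cancel]
    simp only [radial_zero, sub_zero]
    unfold radial
    rw [this]
    have : 0 ≤ (κ + x) ^ γ * x := by positivity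
    nlinarith
  have hX : 0 < κ + x := by linarith
  have hB : 0 < κ + b := by linarith
  set u := (κ + b) / (κ + x) with hu
  have hu0 : 0 < u := by positivity
  have hu1 : u ≤ 1 := (div_le_one hX).2 (by linarith)
  have hbu : b ≤ u * x := by
    rw [hu, div_mul_eq_mul_div, le_div_iff₀ hX]; nlinarith
  have hpow : ∀ η : ℝ, radial κ η x - radial κ η b = (κ + x) ^ η * (x - u ^ η * b) := by
    intro η
    have : (κ + b) ^ η = (κ + x) ^ η * u ^ η := by
      rw [← Real.mul_rpow hX.le hu0.le, hu, mul_div_cancel₀ _ hX.ne']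
    unfold radial
    rw [this]; ring
  rw [hpow, hpow, ← mul_assoc ((κ + x) ^ (γ - δ)), ← Real.rpow_add hX, sub_add_cancel,
    mul_left_comm]
  refine mul_le_mul_of_nonneg_left ?_ (by positivity)
  have key := one_sub_rpow_le (α := γ + 1) (β := δ + 1) (by linarith) (by linarith) hu0.le hu1
  rw [← hC, Real.rpow_add_one hu0.ne', Real.rpow_add_one hu0.ne'] at key
  -- the inequality is affine in `b`: interpolate between `b = 0` and `b = u * x`
  have h1 : 0 ≤ b * (C * (1 - u ^ δ * u) - (1 - u ^ γ * u)) :=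
    mul_nonneg hb.le (by linarith)
  have h2 : 0 ≤ (u * x - b) * (C - 1) := mul_nonneg (by linarith) (by linarith)
  have h3 : 0 ≤ u * (C * (x - u ^ δ * b) - (x - u ^ γ * b)) := by nlinarith
  have h4 := nonneg_of_mul_nonneg_right h3 hu0
  linarith

/-- The derivative of `radial κ γ`. -/
noncomputable def radialDeriv (κ γ s : ℝ) : ℝ := γ * (κ + s) ^ (γ - 1) * s + (κ + s) ^ γ

lemma hasDerivAt_radial {κ γ s : ℝ} (hκ : 0 ≤ κ) (hs : 0 < s) :
    HasDerivAt (radial κ γ) (radialDeriv κ γ s) s := by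
  have h1 : HasDerivAt (fun s : ℝ => κ + s) 1 s := (hasDerivAt_id s).const_add κ
  have h2 := (h1.rpow_const (p := γ) (Or.inl (by linarith))).mul (hasDerivAt_id s)
  refine h2.congr_deriv ?_
  simp only [radialDeriv, id]
  ring

lemma radialDeriv_bounds {κ γ s : ℝ} (hκ : 0 ≤ κ) (hs : 0 < s) :
    min 1 (γ + 1) * (κ + s) ^ γ ≤ radialDeriv κ γ s ∧
      radialDeriv κ γ s ≤ max 1 (γ + 1) * (κ + s) ^ γ := by
  have hX : 0 < κ + s := by linarith
  set P := (κ + s) ^ (γ - 1) with hP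
  have hP0 : 0 < P := by positivity
  have hPX : (κ + s) ^ γ = P * (κ + s) := by
    rw [hP, ← Real.rpow_add_one hX.ne', sub_add_cancel]
  have hD : radialDeriv κ γ s = P * (κ + (γ + 1) * s) := by
    rw [radialDeriv, hPX]; ring
  rw [hD, hPX]
  constructor
  · have : min 1 (γ + 1) * (κ + s) ≤ κ + (γ + 1) * s := by
      nlinarith [min_le_left 1 (γ + 1), min_le_right 1 (γ + 1)]
    nlinarith
  · have : κ + (γ + 1) * s ≤ max 1 (γ + 1) * (κ + s) := by
      nlinarith [le_max_left 1 (γ + 1), le_max_right 1 (γ + 1)]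
    nlinarith

lemma continuousOn_radial {κ γ : ℝ} (hκ : 0 ≤ κ) (hγ : -1 < γ) :
    ContinuousOn (radial κ γ) (Set.Ici 0) := by
  rcases hκ.eq_or_lt with rfl | hκ
  · have : ContinuousOn (fun s : ℝ => s ^ (γ + 1)) (Set.Ici 0) :=
      (Real.continuous_rpow_const (by linarith)).continuousOn
    refine this.congr fun s hs => ?_
    rcases (Set.mem_Ici.1 hs).eq_or_lt with rfl | hs
    · simp [radial, Real.zero_rpow (show γ + 1 ≠ 0 by linarith)]
    · simp [radial, Real.rpow_add_one hs.ne']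
  · unfold radial
    refine ContinuousOn.mul (ContinuousOn.rpow_const (by fun_prop) fun s hs => Or.inl ?_)
      continuousOn_id
    have := Set.mem_Ici.1 hs
    linarith

lemma radial_mono {κ γ b x : ℝ} (hκ : 0 ≤ κ) (hγ : -1 < γ) (hb : 0 ≤ b) (hbx : b ≤ x) :
    radial κ γ b ≤ radial κ γ x := by
  rcases (hb.trans hbx).eq_or_lt with h | hx
  · rw [show b = x by linarith]
  have h := radial_compare (γ := 0) (δ := γ) (by norm_num) hγ hκ hb hbx hx
  have h0 : radial κ 0 x - radial κ 0 b = x - b := by simp [radial]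
  rw [h0] at h
  have h1 : (0 : ℝ) < max 1 ((0 + 1) / (γ + 1)) := lt_max_of_lt_left one_pos
  have h2 : 0 < (κ + x) ^ (0 - γ) := by positivity
  have h3 := nonneg_of_mul_nonneg_right (le_trans (by linarith) h) h1
  linarith [nonneg_of_mul_nonneg_right h3 h2]

/-! ### The shifted potential -/

lemma phiShift_eq (p κ t : ℝ) : phiShift p κ t = ∫ s in (0:ℝ)..t, radial κ (p - 2) s := rfl

lemma intervalIntegrable_radial {κ γ t : ℝ} (hκ : 0 ≤ κ) (hγ : -1 < γ) (ht : 0 ≤ t) :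
    IntervalIntegrable (radial κ γ) volume 0 t := by
  apply ContinuousOn.intervalIntegrable
  rw [Set.uIcc_of_le ht]
  exact (continuousOn_radial hκ hγ).mono fun x hx => hx.1

lemma hasDerivAt_phiShift {p κ t : ℝ} (hp : 1 < p) (hκ : 0 ≤ κ) (ht : 0 < t) :
    HasDerivAt (phiShift p κ) (radial κ (p - 2) t) t := by
  have hc := continuousOn_radial hκ (show -1 < p - 2 by linarith)
  refine intervalIntegral.integral_hasDerivAt_right
    (intervalIntegrable_radial hκ (by linarith) ht.le) ?_ (hc.continuousAt (Ici_mem_nhds ht))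
  exact (hc.mono Set.Ioi_subset_Ici_self).stronglyMeasurableAtFilter isOpen_Ioi t ht

lemma continuousOn_phiShift {p κ : ℝ} (hp : 1 < p) (hκ : 0 ≤ κ) (t : ℝ) (ht : 0 ≤ t) :
    ContinuousOn (phiShift p κ) (Set.Icc 0 t) := by
  have h := intervalIntegral.continuousOn_primitive_interval (μ := volume) (a := 0) (b := t)
    (f := radial κ (p - 2)) (by
      rw [Set.uIcc_of_le ht]
      exact ((continuousOn_radial hκ (by linarith)).mono fun x hx => hx.1).integrableOn_Icc)
  rw [Set.uIcc_of_le ht] at h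
  exact h

/-! ### The scalar estimate -/

lemma le_of_deriv_le {F G F' G' : ℝ → ℝ} {a b K : ℝ} (hab : a ≤ b)
    (hF : ContinuousOn F (Set.Icc a b)) (hG : ContinuousOn G (Set.Icc a b))
    (hF' : ∀ x ∈ Set.Ioo a b, HasDerivAt F (F' x) x)
    (hG' : ∀ x ∈ Set.Ioo a b, HasDerivAt G (G' x) x)
    (hFa : F a = 0) (hGa : G a = 0) (h : ∀ x ∈ Set.Ioo a b, F' x ≤ K * G' x) :
    F b ≤ K * G b := by
  have hm : MonotoneOn (fun x => K * G x - F x) (Set.Icc a b) := by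
    apply monotoneOn_of_hasDerivWithinAt_nonneg (f' := fun x => K * G' x - F' x) (convex_Icc a b)
      ((hG.const_smul K).sub hF)
    · intro x hx
      rw [interior_Icc] at hx
      exact (((hG' x hx).const_mul K).sub (hF' x hx)).hasDerivWithinAt
    · intro x hx
      rw [interior_Icc] at hx
      linarith [h x hx]
  have := hm (Set.left_mem_Icc.2 hab) (Set.right_mem_Icc.2 hab) hab
  simp only [hFa, hGa] at this
  linarith

/-- The Bregman distance of `φ_κ` between nonnegative numbers. -/
noncomputable def breg (p κ a b : ℝ) : ℝ :=
  phiShift p κ a - phiShift p κ b - radial κ (p - 2) b * (a - b)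

/-- The squared distance of the values of the radial profile of `V`. -/
noncomputable def vdist (p κ a b : ℝ) : ℝ :=
  (radial κ ((p - 2) / 2) a - radial κ ((p - 2) / 2) b) ^ 2

lemma hasDerivAt_vdist {p κ b x : ℝ} (hκ : 0 ≤ κ) (hx : 0 < x) :
    HasDerivAt (fun x => vdist p κ x b) (2 * radialDeriv κ ((p - 2) / 2) x *
      (radial κ ((p - 2) / 2) x - radial κ ((p - 2) / 2) b)) x := by
  have h := ((hasDerivAt_radial (γ := (p - 2) / 2) hκ hx).sub_const
    (radial κ ((p - 2) / 2) b)).pow 2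
  refine h.congr_deriv ?_
  push_cast
  ring

lemma continuousOn_vdist {p κ b a : ℝ} (hp : 1 < p) (hκ : 0 ≤ κ) (hb : 0 ≤ b) :
    ContinuousOn (fun x => vdist p κ x b) (Set.Icc b a) := by
  have h := (continuousOn_radial (γ := (p - 2) / 2) hκ (by linarith)).mono
    (fun x (hx : x ∈ Set.Icc b a) => Set.mem_Ici.2 (hb.trans hx.1))
  exact (h.sub continuousOn_const).pow 2

/-- Derivatives in the first variable are compared on `b ≤ a`. -/
lemma bregman_compare_of_le (p : ℝ) (hp : 1 < p) :
    ∃ K : ℝ, 0 < K ∧ ∀ κ : ℝ, 0 ≤ κ → ∀ a b : ℝ, 0 ≤ b → b ≤ a →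
      breg p κ a b ≤ K * vdist p κ a b ∧ vdist p κ a b ≤ K * breg p κ a b := by
  set e := p - 2 with he
  set m := min 1 (e / 2 + 1) with hm
  set M := max 1 (e / 2 + 1) with hM
  set C₁ := max 1 ((e + 1) / (e / 2 + 1)) with hC₁
  set C₂ := max 1 ((e / 2 + 1) / (e + 1)) with hC₂
  have hm0 : 0 < m := lt_min one_pos (by linarith)
  have hM0 : 0 < M := lt_max_of_lt_left one_pos
  have hC₁0 : 0 < C₁ := lt_max_of_lt_left one_pos
  have hC₂0 : 0 < C₂ := lt_max_of_lt_left one_pos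
  have main : ∀ κ : ℝ, 0 ≤ κ → ∀ a b : ℝ, 0 ≤ b → b ≤ a →
      breg p κ a b ≤ C₁ / (2 * m) * vdist p κ a b ∧
        vdist p κ a b ≤ 2 * M * C₂ * breg p κ a b := by
    intro κ hκ a b hb hba
    have hFd : ∀ x ∈ Set.Ioo b a, HasDerivAt (fun x => breg p κ x b)
        (radial κ e x - radial κ e b) x := by
      intro x hx
      have h1 := (hasDerivAt_phiShift hp hκ (hb.trans_lt hx.1)).sub_const (phiShift p κ b)
      have h2 := ((hasDerivAt_id x).sub_const b).const_mul (radial κ e b)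
      exact (h1.sub h2).congr_deriv (by ring)
    have hFc : ContinuousOn (fun x => breg p κ x b) (Set.Icc b a) := by
      have h1 := (continuousOn_phiShift hp hκ a (hb.trans hba)).mono (Set.Icc_subset_Icc_left hb)
      exact (h1.sub continuousOn_const).sub (by fun_prop)
    have hGd : ∀ x ∈ Set.Ioo b a, HasDerivAt (fun x => vdist p κ x b) _ x :=
      fun x hx => hasDerivAt_vdist hκ (hb.trans_lt hx.1)
    have hGc := continuousOn_vdist (a := a) hp hκ hb
    have hF0 : breg p κ b b = 0 := by simp [breg]
    have hG0 : vdist p κ b b = 0 := by simp [vdist]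
    constructor
    · refine le_of_deriv_le (F := fun x => breg p κ x b) (G := fun x => vdist p κ x b)
        hba hFc hGc hFd hGd hF0 hG0 fun x hx => ?_
      have hx0 : 0 < x := hb.trans_lt hx.1
      have h1 := radial_compare (γ := e) (δ := e / 2) (by linarith) (by linarith) hκ hb hx.1.le hx0
      have h2 := (radialDeriv_bounds (γ := e / 2) hκ hx0).1
      have h3 := radial_mono (γ := e / 2) hκ (by linarith) hb hx.1.le
      rw [show e - e / 2 = e / 2 by ring] at h1
      refine h1.trans ?_
      rw [← hC₁, div_mul_eq_mul_div, le_div_iff₀ (by positivity)]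
      have h4 := mul_le_mul_of_nonneg_right h2 (sub_nonneg.2 h3)
      have h5 := mul_le_mul_of_nonneg_left h4 (show 0 ≤ 2 * C₁ by positivity)
      linarith
    · refine le_of_deriv_le (F := fun x => vdist p κ x b) (G := fun x => breg p κ x b)
        hba hGc hFc hGd hFd hG0 hF0 fun x hx => ?_
      have hx0 : 0 < x := hb.trans_lt hx.1
      have hX : 0 < κ + x := by linarith
      have h1 := radial_compare (γ := e / 2) (δ := e) (by linarith) (by linarith) hκ hb hx.1.le hx0
      have h2 := (radialDeriv_bounds (γ := e / 2) hκ hx0).2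
      have h3 := radial_mono (γ := e / 2) hκ (by linarith) hb hx.1.le
      have h4 := mul_le_mul_of_nonneg_right h2 (sub_nonneg.2 h3)
      have hP : (κ + x) ^ (e / 2) * (κ + x) ^ (e / 2 - e) = 1 := by
        rw [← Real.rpow_add hX, show e / 2 + (e / 2 - e) = 0 by ring, Real.rpow_zero]
      have h5 := mul_le_mul_of_nonneg_left h1 (show 0 ≤ M * (κ + x) ^ (e / 2) by positivity)
      have h6 : M * (κ + x) ^ (e / 2) * (C₂ * ((κ + x) ^ (e / 2 - e) *
          (radial κ e x - radial κ e b))) = M * C₂ * (radial κ e x - radial κ e b) := by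
        linear_combination M * C₂ * (radial κ e x - radial κ e b) * hP
      rw [← hC₂, h6] at h5
      linarith
  refine ⟨max (C₁ / (2 * m)) (2 * M * C₂), lt_max_of_lt_right (by positivity),
    fun κ hκ a b hb hba => ?_⟩
  obtain ⟨h1, h2⟩ := main κ hκ a b hb hba
  have hv : 0 ≤ vdist p κ a b := sq_nonneg _
  have hD : 0 ≤ breg p κ a b := nonneg_of_mul_nonneg_right (hv.trans h2) (by positivity)
  exact ⟨h1.trans (mul_le_mul_of_nonneg_right (le_max_left _ _) hv),
    h2.trans (mul_le_mul_of_nonneg_right (le_max_right _ _) hD)⟩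

/-- Derivatives in the second variable are compared on `a ≤ b`. Those in the first variable would not
do here: for `κ = 0`, `p > 2` and `a → 0` their ratio is unbounded. -/
lemma bregman_compare_of_ge (p : ℝ) (hp : 1 < p) :
    ∃ K : ℝ, 0 < K ∧ ∀ κ : ℝ, 0 ≤ κ → ∀ a b : ℝ, 0 ≤ a → a ≤ b →
      breg p κ a b ≤ K * vdist p κ a b ∧ vdist p κ a b ≤ K * breg p κ a b := by
  set e := p - 2 with he
  set m := min 1 (e / 2 + 1) with hm
  set M := max 1 (e / 2 + 1) with hM
  set m' := min 1 (e + 1) with hm'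
  set M' := max 1 (e + 1) with hM'
  set C₁ := max 1 ((0 + 1) / (e / 2 + 1)) with hC₁
  set C₂ := max 1 ((e / 2 + 1) / (0 + 1)) with hC₂
  have hm0 : 0 < m := lt_min one_pos (by linarith)
  have hM0 : 0 < M := lt_max_of_lt_left one_pos
  have hm0' : 0 < m' := lt_min one_pos (by linarith)
  have hM0' : 0 < M' := lt_max_of_lt_left one_pos
  have hC₁0 : 0 < C₁ := lt_max_of_lt_left one_pos
  have hC₂0 : 0 < C₂ := lt_max_of_lt_left one_pos
  have main : ∀ κ : ℝ, 0 ≤ κ → ∀ a b : ℝ, 0 ≤ a → a ≤ b →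
      breg p κ a b ≤ M' * C₁ / (2 * m) * vdist p κ b a ∧
        vdist p κ b a ≤ 2 * M * C₂ / m' * breg p κ a b := by
    intro κ hκ a b ha hab
    have hFd : ∀ x ∈ Set.Ioo a b, HasDerivAt (fun x => breg p κ a x)
        (radialDeriv κ e x * (x - a)) x := by
      intro x hx
      have hx0 := ha.trans_lt hx.1
      have h1 := (hasDerivAt_phiShift hp hκ hx0).const_sub (phiShift p κ a)
      have h2 := (hasDerivAt_radial (γ := e) hκ hx0).mul ((hasDerivAt_id x).const_sub a)
      refine (h1.sub h2).congr_deriv ?_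
      simp only [id]
      ring
    have hFc : ContinuousOn (fun x => breg p κ a x) (Set.Icc a b) := by
      have h1 := (continuousOn_phiShift hp hκ b (ha.trans hab)).mono (Set.Icc_subset_Icc_left ha)
      have h2 := (continuousOn_radial (γ := e) hκ (by linarith)).mono
        (fun x (hx : x ∈ Set.Icc a b) => Set.mem_Ici.2 (ha.trans hx.1))
      exact (continuousOn_const.sub h1).sub (h2.mul (by fun_prop))
    have hGd : ∀ x ∈ Set.Ioo a b, HasDerivAt (fun x => vdist p κ x a) _ x :=
      fun x hx => hasDerivAt_vdist hκ (ha.trans_lt hx.1)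
    have hGc := continuousOn_vdist (a := b) hp hκ ha
    have hF0 : breg p κ a a = 0 := by simp [breg]
    have hG0 : vdist p κ a a = 0 := by simp [vdist]
    have hid : ∀ x, radial κ 0 x - radial κ 0 a = x - a := fun x => by simp [radial]
    constructor
    · refine le_of_deriv_le (F := fun x => breg p κ a x) (G := fun x => vdist p κ x a)
        hab hFc hGc hFd hGd hF0 hG0 fun x hx => ?_
      have hx0 : 0 < x := ha.trans_lt hx.1
      have hX : 0 < κ + x := by linarith
      have h1 := radial_compare (γ := 0) (δ := e / 2) (by norm_num) (by linarith) hκ ha hx.1.le hx0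
      have h2 := (radialDeriv_bounds (γ := e / 2) hκ hx0).1
      have h3 := radial_mono (γ := e / 2) hκ (by linarith) ha hx.1.le
      have h4 := mul_le_mul_of_nonneg_right h2 (sub_nonneg.2 h3)
      have h5 := mul_le_mul_of_nonneg_right (radialDeriv_bounds (γ := e) hκ hx0).2
        (sub_nonneg.2 hx.1.le)
      have hP : (κ + x) ^ e * (κ + x) ^ (0 - e / 2) = (κ + x) ^ (e / 2) := by
        rw [← Real.rpow_add hX]; congr 1; ring
      rw [hid, ← hC₁] at h1
      have h6 := mul_le_mul_of_nonneg_left h1 (show 0 ≤ M' * (κ + x) ^ e by positivity)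
      have h7 : M' * (κ + x) ^ e * (C₁ * ((κ + x) ^ (0 - e / 2) *
          (radial κ (e / 2) x - radial κ (e / 2) a))) =
          M' * C₁ * ((κ + x) ^ (e / 2) * (radial κ (e / 2) x - radial κ (e / 2) a)) := by
        linear_combination M' * C₁ * (radial κ (e / 2) x - radial κ (e / 2) a) * hP
      rw [h7] at h6
      refine (h5.trans h6).trans ?_
      rw [div_mul_eq_mul_div, le_div_iff₀ (by positivity)]
      have h8 := mul_le_mul_of_nonneg_left h4 (show 0 ≤ 2 * (M' * C₁) by positivity)
      linarith
    · refine le_of_deriv_le (F := fun x => vdist p κ x a) (G := fun x => breg p κ a x)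
        hab hGc hFc hGd hFd hG0 hF0 fun x hx => ?_
      have hx0 : 0 < x := ha.trans_lt hx.1
      have hX : 0 < κ + x := by linarith
      have h1 := radial_compare (γ := e / 2) (δ := 0) (by linarith) (by norm_num) hκ ha hx.1.le hx0
      have h2 := (radialDeriv_bounds (γ := e / 2) hκ hx0).2
      have h3 := radial_mono (γ := e / 2) hκ (by linarith) ha hx.1.le
      have h4 := mul_le_mul_of_nonneg_right h2 (sub_nonneg.2 h3)
      have h5 := mul_le_mul_of_nonneg_right (radialDeriv_bounds (γ := e) hκ hx0).1
        (sub_nonneg.2 hx.1.le)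
      have hP : (κ + x) ^ (e / 2) * (κ + x) ^ (e / 2 - 0) = (κ + x) ^ e := by
        rw [← Real.rpow_add hX]; congr 1; ring
      rw [hid, ← hC₂] at h1
      have h6 := mul_le_mul_of_nonneg_left h1 (show 0 ≤ M * (κ + x) ^ (e / 2) by positivity)
      have h7 : M * (κ + x) ^ (e / 2) * (C₂ * ((κ + x) ^ (e / 2 - 0) * (x - a))) =
          M * C₂ * ((κ + x) ^ e * (x - a)) := by
        linear_combination M * C₂ * (x - a) * hP
      rw [h7] at h6
      rw [div_mul_eq_mul_div, le_div_iff₀ hm0']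
      have h8 := mul_le_mul_of_nonneg_left h5 (show 0 ≤ 2 * (M * C₂) by positivity)
      have h9 := mul_le_mul_of_nonneg_right (h4.trans h6) (show 0 ≤ 2 * m' by positivity)
      linarith
  refine ⟨max (M' * C₁ / (2 * m)) (2 * M * C₂ / m'), lt_max_of_lt_right (by positivity),
    fun κ hκ a b hb hba => ?_⟩
  obtain ⟨h1, h2⟩ := main κ hκ a b hb hba
  have hsymm : vdist p κ b a = vdist p κ a b := by unfold vdist; ring
  rw [hsymm] at h1 h2
  have hv : 0 ≤ vdist p κ a b := sq_nonneg _
  have hD : 0 ≤ breg p κ a b := nonneg_of_mul_nonneg_right (hv.trans h2) (by positivity)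
  exact ⟨h1.trans (mul_le_mul_of_nonneg_right (le_max_left _ _) hv),
    h2.trans (mul_le_mul_of_nonneg_right (le_max_right _ _) hD)⟩

lemma bregman_compare (p : ℝ) (hp : 1 < p) :
    ∃ K : ℝ, 0 < K ∧ ∀ κ : ℝ, 0 ≤ κ → ∀ a b : ℝ, 0 ≤ a → 0 ≤ b →
      breg p κ a b ≤ K * vdist p κ a b ∧ vdist p κ a b ≤ K * breg p κ a b := by
  obtain ⟨K₁, hK₁, h₁⟩ := bregman_compare_of_le p hp
  obtain ⟨K₂, hK₂, h₂⟩ := bregman_compare_of_ge p hp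
  refine ⟨K₁ + K₂, by positivity, fun κ hκ a b ha hb => ?_⟩
  have hv : 0 ≤ vdist p κ a b := sq_nonneg _
  rcases le_total b a with h | h
  · obtain ⟨h3, h4⟩ := h₁ κ hκ a b hb h
    have hD : 0 ≤ breg p κ a b := nonneg_of_mul_nonneg_right (hv.trans h4) hK₁
    constructor <;> nlinarith
  · obtain ⟨h3, h4⟩ := h₂ κ hκ a b ha h
    have hD : 0 ≤ breg p κ a b := nonneg_of_mul_nonneg_right (hv.trans h4) hK₂
    constructor <;> nlinarith

/-! ### Frobenius algebra -/

lemma frobNorm_nonneg {n : ℕ} (A : Matrix (Fin n) (Fin n) ℝ) : 0 ≤ frobNorm A :=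
  Real.sqrt_nonneg _

lemma frobNorm_sq {n : ℕ} (A : Matrix (Fin n) (Fin n) ℝ) :
    frobNorm A ^ 2 = ∑ i, ∑ j, A i j ^ 2 :=
  Real.sq_sqrt (Finset.sum_nonneg fun _ _ => Finset.sum_nonneg fun _ _ => sq_nonneg _)

lemma abs_frobInner_le {n : ℕ} (A B : Matrix (Fin n) (Fin n) ℝ) :
    |frobInner A B| ≤ frobNorm A * frobNorm B := by
  refine abs_le_of_sq_le_sq ?_ (mul_nonneg (frobNorm_nonneg A) (frobNorm_nonneg B))
  rw [mul_pow, frobNorm_sq, frobNorm_sq, frobInner, ← Fintype.sum_prod_type',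
    ← Fintype.sum_prod_type', ← Fintype.sum_prod_type']
  exact Finset.sum_mul_sq_le_sq_mul_sq _ _ _

lemma frobInner_smul_sub {n : ℕ} (w : ℝ) (A B : Matrix (Fin n) (Fin n) ℝ) :
    frobInner (w • B) (A - B) = w * (frobInner A B - frobNorm B ^ 2) := by
  rw [frobNorm_sq]
  simp only [frobInner, ← Finset.sum_sub_distrib, Finset.mul_sum]
  refine Finset.sum_congr rfl fun i _ => Finset.sum_congr rfl fun j _ => ?_
  simp only [Matrix.smul_apply, Matrix.sub_apply, smul_eq_mul]
  ring

lemma frobNorm_smul_sub_smul_sq {n : ℕ} (v w : ℝ) (A B : Matrix (Fin n) (Fin n) ℝ) :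
    frobNorm (v • A - w • B) ^ 2 =
      v ^ 2 * frobNorm A ^ 2 + w ^ 2 * frobNorm B ^ 2 - 2 * v * w * frobInner A B := by
  rw [frobNorm_sq, frobNorm_sq, frobNorm_sq]
  simp only [frobInner, ← Finset.sum_sub_distrib, ← Finset.sum_add_distrib, Finset.mul_sum]
  refine Finset.sum_congr rfl fun i _ => Finset.sum_congr rfl fun j _ => ?_
  simp only [Matrix.smul_apply, Matrix.sub_apply, smul_eq_mul]
  ring

/-- An affine function that is nonnegative at both ends of `[-t, t]` is nonnegative on `[-t, t]`. -/
lemma affine_nonneg {α β t r : ℝ} (hr : |r| ≤ t) (h1 : 0 ≤ α + β * t) (h2 : 0 ≤ α - β * t) :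
    0 ≤ α + β * r := by
  obtain ⟨h3, h4⟩ := abs_le.1 hr
  rcases le_total 0 β with h | h <;> nlinarith

/-! ### Opposite directions and the theorem -/

lemma radial_half_sq {κ γ s : ℝ} (hκ : 0 ≤ κ) (hs : 0 ≤ s) :
    radial κ (γ / 2) s ^ 2 = radial κ γ s * s := by
  have : ((κ + s) ^ (γ / 2)) ^ 2 = (κ + s) ^ γ := by
    rw [← Real.rpow_natCast, ← Real.rpow_mul (by linarith)]
    congr 1
    push_cast
    ring
  unfold radial
  rw [mul_pow, this]
  ring

/-- The scalar estimate for two numbers of opposite sign: the left-hand side is the Bregman distance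
of the even function `t ↦ φ_κ |t|` from `b` to `-a`. -/
lemma bregman_compare_neg {p κ K a b : ℝ} (hp : 1 < p) (hκ : 0 ≤ κ) (hK : 0 < K) (ha : 0 ≤ a)
    (hb : 0 ≤ b)
    (h : ∀ a b : ℝ, 0 ≤ a → 0 ≤ b →
      breg p κ a b ≤ K * vdist p κ a b ∧ vdist p κ a b ≤ K * breg p κ a b) :
    breg p κ a b + 2 * radial κ (p - 2) b * a ≤
        (K + 1) * (radial κ ((p - 2) / 2) a + radial κ ((p - 2) / 2) b) ^ 2 ∧
      (radial κ ((p - 2) / 2) a + radial κ ((p - 2) / 2) b) ^ 2 ≤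
        2 * K * (breg p κ a b + 2 * radial κ (p - 2) b * a) := by
  obtain ⟨h1, h2⟩ := h a 0 ha le_rfl
  obtain ⟨h3, h4⟩ := h 0 b le_rfl hb
  have hsum : breg p κ a b + 2 * radial κ (p - 2) b * a =
      breg p κ a 0 + breg p κ 0 b + radial κ (p - 2) b * a := by
    simp only [breg, radial_zero]
    have : phiShift p κ 0 = 0 := by simp [phiShift]
    rw [this]
    ring
  have hv1 : vdist p κ a 0 = radial κ ((p - 2) / 2) a ^ 2 := by simp [vdist, radial_zero]
  have hv2 : vdist p κ 0 b = radial κ ((p - 2) / 2) b ^ 2 := by simp [vdist, radial_zero]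
  rw [hv1] at h1 h2
  rw [hv2] at h3 h4
  rw [hsum]
  have hga : 0 ≤ radial κ ((p - 2) / 2) a := by unfold radial; positivity
  have hgb : 0 ≤ radial κ ((p - 2) / 2) b := by unfold radial; positivity
  have hfa : 0 ≤ radial κ (p - 2) a := by unfold radial; positivity
  have hfb : 0 ≤ radial κ (p - 2) b := by unfold radial; positivity
  have ea := radial_half_sq (γ := p - 2) hκ ha
  have eb := radial_half_sq (γ := p - 2) hκ hb
  -- Young's inequality for the mixed term
  have hmix : radial κ (p - 2) b * a ≤
      radial κ ((p - 2) / 2) a ^ 2 + radial κ ((p - 2) / 2) b ^ 2 := by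
    rw [ea, eb]
    rcases le_total a b with hab | hab
    · nlinarith
    · have := radial_mono (γ := p - 2) hκ (by linarith) hb hab
      nlinarith
  set x := radial κ ((p - 2) / 2) a
  set y := radial κ ((p - 2) / 2) b
  have hxy : 0 ≤ x * y := mul_nonneg hga hgb
  constructor
  · nlinarith
  · have : 0 ≤ K * (radial κ (p - 2) b * a) := by positivity
    nlinarith [sq_nonneg (x - y)]

theorem stmt_7 (p : ℝ) (hp : 1 < p) :
    ∃ c C : ℝ, 0 < c ∧ c ≤ C ∧
      ∀ (n : ℕ), 1 ≤ n → ∀ κ : ℝ, 0 ≤ κ →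
        ∀ A B : Matrix (Fin n) (Fin n) ℝ,
          c * frobNorm (Vmap p κ A - Vmap p κ B) ^ 2 ≤
              phiShift p κ (frobNorm A) - phiShift p κ (frobNorm B) -
                frobInner (Smap p κ B) (A - B) ∧
          phiShift p κ (frobNorm A) - phiShift p κ (frobNorm B) -
              frobInner (Smap p κ B) (A - B) ≤
            C * frobNorm (Vmap p κ A - Vmap p κ B) ^ 2 := by
  obtain ⟨K, hK, hcomp⟩ := bregman_compare p hp
  refine ⟨min (1 / (2 * K)) 1, K + 1, lt_min (by positivity) one_pos,
    (min_le_right _ _).trans (by linarith), fun n _ κ hκ A B => ?_⟩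
  have ha := frobNorm_nonneg A
  have hb := frobNorm_nonneg B
  have hr := abs_frobInner_le A B
  obtain ⟨h1, h2⟩ := hcomp κ hκ _ _ ha hb
  obtain ⟨h3, h4⟩ := bregman_compare_neg hp hκ hK ha hb (hcomp κ hκ)
  have hV0 : 0 ≤ frobNorm (Vmap p κ A - Vmap p κ B) ^ 2 := sq_nonneg _
  -- reduce the constant `min (1 / (2 * K)) 1` to `1 / (2 * K)`
  suffices hs : frobNorm (Vmap p κ A - Vmap p κ B) ^ 2 ≤
      2 * K * (phiShift p κ (frobNorm A) - phiShift p κ (frobNorm B) -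
        frobInner (Smap p κ B) (A - B)) ∧
      phiShift p κ (frobNorm A) - phiShift p κ (frobNorm B) -
        frobInner (Smap p κ B) (A - B) ≤
          (K + 1) * frobNorm (Vmap p κ A - Vmap p κ B) ^ 2 by
    refine ⟨(mul_le_mul_of_nonneg_right (min_le_left _ _) hV0).trans ?_, hs.2⟩
    rw [div_mul_eq_mul_div, one_mul, div_le_iff₀ (by positivity)]
    linarith [hs.1]
  rw [Vmap, Vmap, Smap, frobNorm_smul_sub_smul_sq, frobInner_smul_sub]
  have hD : 0 ≤ breg p κ (frobNorm A) (frobNorm B) :=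
    nonneg_of_mul_nonneg_right ((sq_nonneg _).trans h2) hK
  have hv : 0 ≤ vdist p κ (frobNorm A) (frobNorm B) := sq_nonneg _
  have h1' : breg p κ (frobNorm A) (frobNorm B) ≤
      (K + 1) * vdist p κ (frobNorm A) (frobNorm B) := by nlinarith
  have h2' : vdist p κ (frobNorm A) (frobNorm B) ≤
      2 * K * breg p κ (frobNorm A) (frobNorm B) := by nlinarith
  clear h1 h2
  simp only [breg, vdist, radial] at h1' h2' h3 h4
  set a := frobNorm A
  set b := frobNorm B
  set r := frobInner A B
  set w := (κ + b) ^ (p - 2)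
  set v₁ := (κ + a) ^ ((p - 2) / 2)
  set v₂ := (κ + b) ^ ((p - 2) / 2)
  set Φ := phiShift p κ a
  set Ψ := phiShift p κ b
  constructor
  · have := affine_nonneg (α := 2 * K * (Φ - Ψ + w * b ^ 2) - (v₁ ^ 2 * a ^ 2 + v₂ ^ 2 * b ^ 2))
      (β := 2 * v₁ * v₂ - 2 * K * w) hr (by linarith) (by linarith)
    linarith
  · have := affine_nonneg (α := (K + 1) * (v₁ ^ 2 * a ^ 2 + v₂ ^ 2 * b ^ 2) - (Φ - Ψ + w * b ^ 2))
      (β := w - (K + 1) * (2 * v₁ * v₂)) hr (by linarith) (by linarith)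
    linarith
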